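/- For any infinite binary word w, (5·r_sup(w) − 2)/3 ≤ R_sup(w). -/

import Mathlib

/-!
Call a zero of a finite word *good* if one of the patterns `00`, `0100`, `01010` starts at it, and
*bad* otherwise; `Pcount` is the number of good zeros. Away from the end of the word, a bad zero is
followed by `11` or by `1011`. A block `011` preceded by `01` thus contributes two bad zeros and at
least three ones, and any other block `011` one bad zero and at least two ones. So three times the
number of bad zeros is at most twice the number of ones, up to a bounded end effect, that is
`5 Z ≤ 2 n + 3 P + 4` (`five_mul_Zcount_le`). Dividing by `n` and passing to the limit superior
gives the theorem.

The finite inequality is proved by prepending letters one at a time: the surplus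
`2 n + 3 P - 5 Z` is unchanged by a good zero, drops by `3` at a bad zero and grows by `2` at a
one, and it is bounded below by a quantity depending on the first four letters only
(`surplus_invariant`).
-/


open Filter

/-- `patternAt w i` means the 1-based index `i ≥ 2` in the finite binary word `w`
(`false` = 0, `true` = 1) is a member of the set `P(w)`: one of the patterns
`00`, `0100`, `01010` occurs starting at position `i-1` (1-based) and fits in `w`. -/
def patternAt (w : List Bool) (i : ℕ) : Prop :=
  2 ≤ i ∧
    ([false, false] <+: w.drop (i - 2) ∨
     [false, true, false, false] <+: w.drop (i - 2) ∨
     [false, true, false, true, false] <+: w.drop (i - 2))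

instance (w : List Bool) : DecidablePred (patternAt w) := fun i => by
  unfold patternAt; infer_instance

/-- The set `P(w)` of indices, as a `Finset`. -/
def Pset (w : List Bool) : Finset ℕ :=
  (Finset.range (w.length + 1)).filter (patternAt w)

/-- `|P(w)|`. -/
def Pcount (w : List Bool) : ℕ := (Pset w).card

/-- `|Z(w)|`: the number of zeroes in `w`. -/
def Zcount (w : List Bool) : ℕ := w.count false

/-- The initial subword `w^(n)` of an infinite binary word `w = w_1 w_2 w_3 ⋯`
(indexed so that `w k` is the letter `w_{k+1}`). -/
def prefixWord (w : ℕ → Bool) (n : ℕ) : List Bool := List.ofFn (fun k : Fin n => w k)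

noncomputable def rinf (w : ℕ → Bool) : ℝ :=
  liminf (fun n : ℕ => (Zcount (prefixWord w n) : ℝ) / n) atTop

noncomputable def rsup (w : ℕ → Bool) : ℝ :=
  limsup (fun n : ℕ => (Zcount (prefixWord w n) : ℝ) / n) atTop

noncomputable def Rinf (w : ℕ → Bool) : ℝ :=
  liminf (fun n : ℕ => (Pcount (prefixWord w n) : ℝ) / n) atTop

noncomputable def Rsup (w : ℕ → Bool) : ℝ :=
  limsup (fun n : ℕ => (Pcount (prefixWord w n) : ℝ) / n) atTop

/-- One of the patterns `00`, `0100`, `01010` is a prefix of `l`. -/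
def HeadPattern (l : List Bool) : Prop :=
  [false, false] <+: l ∨ [false, true, false, false] <+: l ∨
    [false, true, false, true, false] <+: l

instance : DecidablePred HeadPattern := fun l => by
  unfold HeadPattern; infer_instance

lemma two_le_length_of_headPattern {l : List Bool} (h : HeadPattern l) : 2 ≤ l.length := by
  rcases h with h | h | h <;> have := h.length_le <;> simp at this <;> omega

/-- The index `i` of `patternAt` corresponds to the 0-based starting position `j = i - 2`. -/
lemma Pcount_eq_sum (l : List Bool) :
    Pcount l = ∑ j ∈ Finset.range l.length, if HeadPattern (l.drop j) then 1 else 0 := by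
  -- The index `l.length + 1` is harmless to add: no pattern fits there.
  have hlast : ¬ patternAt l (l.length + 1) := by
    rintro ⟨h2, h⟩
    have := two_le_length_of_headPattern h
    rw [List.length_drop] at this
    omega
  have h0 : ¬ patternAt l 0 := fun h => by have := h.1; omega
  have h1 : ¬ patternAt l (0 + 1) := fun h => by have := h.1; omega
  have hext : Pcount l = ∑ i ∈ Finset.range (l.length + 2), if patternAt l i then 1 else 0 := by
    rw [Finset.sum_range_succ, if_neg hlast, Pcount, Pset, Finset.card_filter, add_zero]
  rw [hext, Finset.sum_range_succ', Finset.sum_range_succ', if_neg h0, if_neg h1]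
  simp only [add_zero]
  refine Finset.sum_congr rfl fun j _ => ?_
  congr 1
  simp [patternAt, HeadPattern]

lemma Pcount_cons (a : Bool) (l : List Bool) :
    Pcount (a :: l) = Pcount l + if HeadPattern (a :: l) then 1 else 0 := by
  rw [Pcount_eq_sum, Pcount_eq_sum, List.length_cons, Finset.sum_range_succ']
  simp

/-- The surplus `2 |l| + 3 P(l) - 5 Z(l)`. -/
def surplus (l : List Bool) : ℤ := 2 * l.length + 3 * Pcount l - 5 * Zcount l

lemma surplus_nil : surplus [] = 0 := by
  simp [surplus, Pcount_eq_sum, Zcount]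

lemma surplus_true (l : List Bool) : surplus (true :: l) = surplus l + 2 := by
  have : ¬ HeadPattern (true :: l) := by simp [HeadPattern]
  simp [surplus, Pcount_cons, Zcount, this]
  ring

lemma surplus_good {l : List Bool} (h : HeadPattern (false :: l)) :
    surplus (false :: l) = surplus l := by
  simp [surplus, Pcount_cons, Zcount, h]
  ring

lemma surplus_bad {l : List Bool} (h : ¬ HeadPattern (false :: l)) :
    surplus (false :: l) = surplus l - 3 := by
  simp [surplus, Pcount_cons, Zcount, h]
  ring

/-- Lower bounds for the surplus in terms of the first letters. The constant `4` absorbs the bad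
zeros caused by the end of the word; it is attained by `010`. -/
lemma surplus_invariant (l : List Bool) :
    0 ≤ surplus l + 4 ∧
    ([true] <+: l → 2 ≤ surplus l + 4) ∧
    ([true, true] <+: l → 4 ≤ surplus l + 4) ∧
    ([false, true, true] <+: l → 1 ≤ surplus l + 4) ∧
    ([true, false, true, true] <+: l → 3 ≤ surplus l + 4) := by
  induction l with
  | nil => simp [surplus_nil]
  | cons a l ih =>
    obtain ⟨i0, i1, i2, i3, i4⟩ := ih
    cases a with
    | true =>
      rw [surplus_true]
      refine ⟨by omega, fun _ => by omega, fun h => ?_, fun h => ?_, fun h => ?_⟩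
      · have := i1 (by simpa using h)
        omega
      · simp at h
      · have := i3 (by simpa using h)
        omega
    | false =>
      by_cases hp : HeadPattern (false :: l)
      · rw [surplus_good hp]
        refine ⟨i0, fun h => ?_, fun h => ?_, fun h => ?_, fun h => ?_⟩
        · simp at h
        · simp at h
        · have := i2 (by simpa using h)
          omega
        · simp at h
      · rw [surplus_bad hp]
        refine ⟨?_, fun h => ?_, fun h => ?_, fun h => ?_, fun h => ?_⟩
        · -- A bad zero is followed by `11` or `1011`, unless the word ends too early.
          match l, hp with
          | [], _ => simp [surplus_nil]
          | false :: _, hp => simp [HeadPattern] at hp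
          | [true], _ => simp [surplus_nil, surplus_true]
          | true :: true :: _, _ =>
            have := i2 (by simp)
            omega
          | [true, false], _ =>
            have : ¬ HeadPattern [false] := by decide
            simp [surplus_nil, surplus_true, surplus_bad this]
          | true :: false :: false :: _, hp => simp [HeadPattern] at hp
          | [true, false, true], _ =>
            have : ¬ HeadPattern [false, true] := by decide
            simp [surplus_nil, surplus_true, surplus_bad this]
          | true :: false :: true :: false :: _, hp => simp [HeadPattern] at hp
          | true :: false :: true :: true :: _, _ =>
            have := i4 (by simp)
            omega
        · simp at h
        · simp at h
        · have := i2 (by simpa using h)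
          omega
        · simp at h

lemma five_mul_Zcount_le (l : List Bool) :
    5 * (Zcount l : ℝ) ≤ 2 * l.length + 3 * Pcount l + 4 := by
  have h := (surplus_invariant l).1
  unfold surplus at h
  have h' : 5 * (Zcount l : ℤ) ≤ 2 * l.length + 3 * Pcount l + 4 := by linarith
  exact_mod_cast h'

lemma Pcount_le_length (l : List Bool) : Pcount l ≤ l.length := by
  rw [Pcount_eq_sum, ← Finset.card_filter]
  exact (Finset.card_filter_le _ _).trans (by simp)

theorem stmt_7 (w : ℕ → Bool) : (5 * rsup w - 2) / 3 ≤ Rsup w := by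
  have hlen : ∀ n, (prefixWord w n).length = n := fun n => by simp [prefixWord]
  -- Boundedness of both ratios, without which the real `limsup` is a junk value.
  have hP : IsBoundedUnder (· ≤ ·) atTop
      (fun n : ℕ => (Pcount (prefixWord w n) : ℝ) / n) := by
    refine isBoundedUnder_of ⟨1, fun n => div_le_one_of_le₀ ?_ (Nat.cast_nonneg n)⟩
    have := Pcount_le_length (prefixWord w n)
    rw [hlen] at this
    exact_mod_cast this
  have hZ : IsCoboundedUnder (· ≤ ·) atTop
      (fun n : ℕ => (Zcount (prefixWord w n) : ℝ) / n) :=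
    IsBoundedUnder.isCoboundedUnder_le (isBoundedUnder_of ⟨0, fun n => by positivity⟩)
  refine le_of_forall_pos_le_add fun ε hε => ?_
  have hlim : Tendsto (fun n : ℕ => (4 : ℝ) / n) atTop (nhds 0) :=
    tendsto_const_div_atTop_nhds_zero_nat 4
  have key : rsup w ≤ (2 + 3 * (Rsup w + ε / 2) + ε) / 5 := by
    refine limsup_le_of_le hZ ?_
    have hlt : Rsup w < Rsup w + ε / 2 := by linarith
    filter_upwards [eventually_lt_of_limsup_lt hlt hP, hlim.eventually_lt_const hε,
      eventually_gt_atTop 0] with n h1 h2 hn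
    have hn' : (0 : ℝ) < n := by exact_mod_cast hn
    have h := five_mul_Zcount_le (prefixWord w n)
    rw [hlen] at h
    have h3 : 5 * ((Zcount (prefixWord w n) : ℝ) / n)
        ≤ 2 + 3 * ((Pcount (prefixWord w n) : ℝ) / n) + 4 / n := by
      calc 5 * ((Zcount (prefixWord w n) : ℝ) / n)
          = (5 * (Zcount (prefixWord w n) : ℝ)) / n := by ring
        _ ≤ (2 * n + 3 * (Pcount (prefixWord w n) : ℝ) + 4) / n := by gcongr
        _ = _ := by field_simp
    linarith
  linarith
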